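/- For all x in (0, π/2), sin(x)/x < (cos x + 2)/3 < x/sinh(x). -/

import Mathlib

open Real

/-!
The left inequality is the Cusa inequality: `3 sin x / (cos x + 2)` vanishes at `0` and has
derivative `1 - ((1 - cos x) / (cos x + 2)) ^ 2`, less than `1` unless `cos x = 1`. For the right
one, `sinh x * (cos x + 2)` agrees with `3 x` to first order at `0` and has second derivative
`2 (sinh x - cosh x * sin x)`. This is negative exactly when `tanh x < sin x`, which on `(0, π/2]`
amounts to `cosh x * cos x < 1`.
-/

theorem lt_of_hasDerivAt_lt {f g f' g' : ℝ → ℝ} {a b : ℝ} (hab : a < b)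
    (hfc : ContinuousOn f (Set.Icc a b)) (hgc : ContinuousOn g (Set.Icc a b))
    (hf : ∀ y ∈ Set.Ioo a b, HasDerivAt f (f' y) y)
    (hg : ∀ y ∈ Set.Ioo a b, HasDerivAt g (g' y) y)
    (ha : f a ≤ g a) (hlt : ∀ y ∈ Set.Ioo a b, f' y < g' y) : f b < g b := by
  obtain ⟨c, hc, hslope⟩ := exists_hasDerivAt_eq_slope (g - f) (g' - f') hab (hgc.sub hfc)
    fun y hy => (hg y hy).sub (hf y hy)
  have hslope_pos : 0 < ((g - f) b - (g - f) a) / (b - a) :=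
    hslope ▸ sub_pos.2 (hlt c hc)
  have hincr : 0 < (g b - f b) - (g a - f a) :=
    (div_pos_iff_of_pos_right (sub_pos.2 hab)).1 hslope_pos
  linarith

theorem hasDerivAt_three_mul_sin_div_cos_add_two (x : ℝ) :
    HasDerivAt (fun y => 3 * sin y / (cos y + 2))
      (1 - ((1 - cos x) / (cos x + 2)) ^ 2) x := by
  have hden : cos x + 2 ≠ 0 := by linarith [neg_one_le_cos x]
  refine (((hasDerivAt_sin x).const_mul 3).div ((hasDerivAt_cos x).add_const 2) hden).congr_deriv ?_
  field_simp
  linear_combination 3 * sin_sq_add_cos_sq x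

theorem three_mul_sin_lt_mul_cos_add_two {x : ℝ} (hx : 0 < x) :
    3 * sin x < x * (cos x + 2) := by
  have cos_add_two_pos (y : ℝ) : 0 < cos y + 2 := by linarith [neg_one_le_cos y]
  rcases le_or_gt x π with hxπ | hπx
  · rw [← div_lt_iff₀ (cos_add_two_pos x)]
    refine lt_of_hasDerivAt_lt hx
      (fun y _ => (hasDerivAt_three_mul_sin_div_cos_add_two y).continuousAt.continuousWithinAt)
      continuousOn_id (fun y _ => hasDerivAt_three_mul_sin_div_cos_add_two y)
      (fun y _ => hasDerivAt_id y) (by simp) fun y hy => ?_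
    have hcos : cos y < 1 := by
      simpa using cos_lt_cos_of_nonneg_of_le_pi le_rfl (hy.2.le.trans hxπ) hy.1
    exact sub_lt_self 1 (pow_pos (div_pos (sub_pos.2 hcos) (cos_add_two_pos y)) 2)
  · calc 3 * sin x ≤ 3 := by linarith [sin_le_one x]
      _ < x := pi_gt_three.trans hπx
      _ ≤ x * (cos x + 2) := le_mul_of_one_le_right hx.le (by linarith [neg_one_le_cos x])

theorem sinh_mul_cos_lt_cosh_mul_sin {x : ℝ} (hx : 0 < x) (hxπ : x ≤ π) :
    sinh x * cos x < cosh x * sin x := by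
  refine lt_of_hasDerivAt_lt hx (by fun_prop) (by fun_prop)
    (fun y _ => (hasDerivAt_sinh y).mul (hasDerivAt_cos y))
    (fun y _ => (hasDerivAt_cosh y).mul (hasDerivAt_sin y)) (by simp) fun y hy => ?_
  have hpos : 0 < sinh y * sin y :=
    mul_pos (sinh_pos_iff.2 hy.1) (sin_pos_of_pos_of_lt_pi hy.1 (hy.2.trans_le hxπ))
  linarith

theorem cosh_mul_cos_lt_one {x : ℝ} (hx : 0 < x) (hxπ : x ≤ π) : cosh x * cos x < 1 := by
  refine lt_of_hasDerivAt_lt hx (by fun_prop) continuousOn_const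
    (fun y _ => (hasDerivAt_cosh y).mul (hasDerivAt_cos y))
    (fun y _ => hasDerivAt_const y 1) (by simp) fun y hy => ?_
  linarith [sinh_mul_cos_lt_cosh_mul_sin hy.1 (hy.2.le.trans hxπ)]

theorem sinh_lt_cosh_mul_sin {x : ℝ} (hx : 0 < x) (hx2 : x ≤ π / 2) :
    sinh x < cosh x * sin x := by
  have hsin : 0 ≤ sin x := sin_nonneg_of_nonneg_of_le_pi hx.le (by linarith)
  have hcos : 0 ≤ cos x := cos_nonneg_of_neg_pi_div_two_le_of_le (by linarith) hx2
  have hsq : (cosh x * cos x) ^ 2 < 1 :=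
    pow_lt_one₀ (mul_nonneg (cosh_pos x).le hcos)
      (cosh_mul_cos_lt_one hx (by linarith)) two_ne_zero
  refine lt_of_pow_lt_pow_left₀ 2 (mul_nonneg (cosh_pos x).le hsin) ?_
  calc sinh x ^ 2 = cosh x ^ 2 - 1 := sinh_sq x
    _ < cosh x ^ 2 - (cosh x * cos x) ^ 2 := by linarith
    _ = (cosh x * sin x) ^ 2 := by rw [mul_pow, mul_pow, sin_sq]; ring

theorem cosh_mul_cos_add_two_sub_sinh_mul_sin_lt_three {x : ℝ} (hx : 0 < x) (hx2 : x ≤ π / 2) :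
    cosh x * (cos x + 2) - sinh x * sin x < 3 := by
  refine lt_of_hasDerivAt_lt hx (by fun_prop) continuousOn_const
    (fun y _ => ((hasDerivAt_cosh y).mul ((hasDerivAt_cos y).add_const 2)).sub
      ((hasDerivAt_sinh y).mul (hasDerivAt_sin y)))
    (fun y _ => hasDerivAt_const y 3) (by norm_num) fun y hy => ?_
  linarith [sinh_lt_cosh_mul_sin hy.1 (hy.2.le.trans hx2)]

theorem sinh_mul_cos_add_two_lt_three_mul {x : ℝ} (hx : 0 < x) (hx2 : x ≤ π / 2) :
    sinh x * (cos x + 2) < 3 * x := by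
  refine lt_of_hasDerivAt_lt hx (by fun_prop) (by fun_prop)
    (fun y _ => (hasDerivAt_sinh y).mul ((hasDerivAt_cos y).add_const 2))
    (fun y _ => (hasDerivAt_id y).const_mul 3) (by simp) fun y hy => ?_
  linarith [cosh_mul_cos_add_two_sub_sinh_mul_sin_lt_three hy.1 (hy.2.le.trans hx2)]

theorem stmt15 (x : ℝ) (hx : 0 < x) (hx2 : x < π/2) :
    Real.sin x/x < (Real.cos x + 2)/3 ∧ (Real.cos x + 2)/3 < x/Real.sinh x := by
  constructor
  · rw [div_lt_div_iff₀ hx three_pos]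
    linarith [three_mul_sin_lt_mul_cos_add_two hx]
  · rw [div_lt_div_iff₀ three_pos (sinh_pos_iff.2 hx)]
    linarith [sinh_mul_cos_add_two_lt_three_mul hx hx2.le]
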